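/- arXiv:1009.0029 — 2 statements merged into one kernel-verified Lean document; each statement's English description precedes it below -/
import Mathlib

section
/- Let K be a field and Q a finite acyclic quiver. If V and W are projective objects of the category of representations of Q over K whose value at every vertex is a finite-dimensional K-vector space, then the pointwise tensor product V ⊗ W is a projective object. -/
open CategoryTheory MonoidalCategory

namespace QuiverTensor

universe u

/-- An element of a set-valued representation together with an arrow out of its vertex. -/
abbrev Pre {V : Type} [Quiver.{u} V] (S : Paths V ⥤ Type) (y : V) :=
  Σ x : V, (x ⟶ y) × S.obj ((Paths.of V).obj x)

/-- The action of an arrow on an element. -/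
def push {V : Type} [Quiver.{u} V] (S : Paths V ⥤ Type) (y : V) (d : Pre S y) :
    S.obj ((Paths.of V).obj y) :=
  S.map ((Paths.of V).map d.2.1) d.2.2

/-- Set-valued representations where every element comes from at most one arrow. -/
def IsFree {V : Type} [Quiver.{u} V] (S : Paths V ⥤ Type) : Prop :=
  ∀ y : V, Function.Injective (push S y)

lemma wf_arrow {V : Type} [Quiver.{u} V] [Finite V]
    (hacyclic : ∀ (v : V) (p : Quiver.Path v v), p.length = 0) :
    WellFounded (fun x y : V => ∃ p : Quiver.Path x y, 0 < p.length) := by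
  have : IsTrans V (fun x y : V => ∃ p : Quiver.Path x y, 0 < p.length) :=
    ⟨fun x y z ⟨p, hp⟩ ⟨q, hq⟩ => ⟨p.comp q, by rw [Quiver.Path.length_comp]; omega⟩⟩
  have : Std.Irrefl (fun x y : V => ∃ p : Quiver.Path x y, 0 < p.length) :=
    ⟨fun x ⟨p, hp⟩ => by rw [hacyclic x p] at hp; omega⟩
  exact Finite.wellFounded_of_trans_of_irrefl _

open Classical in
lemma IsFree.projective {V : Type} [Quiver.{u} V] [Finite V]
    (hacyclic : ∀ (v : V) (p : Quiver.Path v v), p.length = 0)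
    {S : Paths V ⥤ Type} (hS : IsFree S) : Projective S where
  factors {E X} f e he := by
    have hsurj : ∀ (y : V) (z : X.obj ((Paths.of V).obj y)), ∃ t, e.app ((Paths.of V).obj y) t = z := by
      intro y
      rw [NatTrans.epi_iff_epi_app] at he
      exact (epi_iff_surjective _).1 (he ((Paths.of V).obj y))
    let wf := wf_arrow hacyclic
    let C : V → Type := fun y => ∀ s : S.obj ((Paths.of V).obj y),
      {t : E.obj ((Paths.of V).obj y) //
        e.app ((Paths.of V).obj y) t = f.app ((Paths.of V).obj y) s}
    let F : ∀ y, (∀ x, (∃ p : Quiver.Path x y, 0 < p.length) → C x) → C y := fun y rec s =>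
      if h : ∃ d : Pre S y, push S y d = s then
        ⟨E.map ((Paths.of V).map h.choose.2.1)
          (rec h.choose.1 ⟨h.choose.2.1.toPath, by simp⟩ h.choose.2.2).1, by
            have h1 := NatTrans.naturality_apply e ((Paths.of V).map h.choose.2.1)
              (rec h.choose.1 ⟨h.choose.2.1.toPath, by simp⟩ h.choose.2.2).1
            have h2 := NatTrans.naturality_apply f ((Paths.of V).map h.choose.2.1) h.choose.2.2
            have h3 := (rec h.choose.1 ⟨h.choose.2.1.toPath, by simp⟩ h.choose.2.2).2
            rw [h1, h3, ← h2]
            exact congrArg _ h.choose_spec⟩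
      else ⟨(hsurj y (f.app _ s)).choose, (hsurj y (f.app _ s)).choose_spec⟩
    let g : ∀ y, C y := wf.fix F
    have hg : ∀ (y : V) (d : Pre S y), (g y (push S y d)).1 =
        E.map ((Paths.of V).map d.2.1) (g d.1 d.2.2).1 := by
      intro y d
      have h : ∃ d' : Pre S y, push S y d' = push S y d := ⟨d, rfl⟩
      have hd : h.choose = d := hS y h.choose_spec
      have : g y = F y (fun x _ => g x) := wf.fix_eq F y
      rw [this]
      simp only [F]
      rw [dif_pos h]
      simp only
      rw [hd]
    refine ⟨{ app := fun y => ↾(fun s => (g y s).1), naturality := ?_ }, ?_⟩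
    · intro a b p
      induction p using Paths.induction_fixed_source with
      | id => simp
      | comp p q ih =>
        rw [S.map_comp, E.map_comp, ← Category.assoc, ← ih, Category.assoc, Category.assoc]
        congr 1
        ext s
        exact hg _ ⟨_, q, s⟩
    · ext y s
      exact (g y s).2

lemma small_path_length {V : Type} [Quiver.{u} V] [∀ a b : V, Small.{0} (a ⟶ b)] (x : V) (n : ℕ) :
    ∀ y : V, Small.{0} {p : Quiver.Path x y // p.length = n} := by
  induction n with
  | zero =>
    intro y
    have : Subsingleton {p : Quiver.Path x y // p.length = 0} := by
      refine ⟨?_⟩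
      rintro ⟨p, hp⟩ ⟨q, hq⟩
      obtain rfl := Quiver.Path.eq_of_length_zero p hp
      rw [Subtype.mk.injEq, Quiver.Path.eq_nil_of_length_zero p hp,
        Quiver.Path.eq_nil_of_length_zero q hq]
    infer_instance
  | succ n ih =>
    intro y
    let φ : (Σ z : V, {p : Quiver.Path x z // p.length = n} × (z ⟶ y)) →
        {p : Quiver.Path x y // p.length = n + 1} :=
      fun d => ⟨d.2.1.1.cons d.2.2, by simp [d.2.1.2]⟩
    refine small_of_surjective (f := φ) ?_
    rintro ⟨p, hp⟩
    cases p with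
    | nil => simp at hp
    | cons p a => exact ⟨⟨_, ⟨p, by simpa using hp⟩, a⟩, rfl⟩

lemma small_path {V : Type} [Quiver.{u} V] [∀ a b : V, Small.{0} (a ⟶ b)] (x y : Paths V) :
    Small.{0} (x ⟶ y) := by
  have := fun n => small_path_length (V := V) x n y
  let φ : (Σ n : ℕ, {p : Quiver.Path (V := V) x y // p.length = n}) → (x ⟶ y) := fun d => d.2.1
  exact small_of_surjective (f := φ) (fun p => ⟨⟨_, p, rfl⟩, rfl⟩)

/-- The canonical free set-valued representation covering `X`. -/
noncomputable def cover {V : Type} [Quiver.{u} V] [∀ x y : Paths V, Small.{0} (x ⟶ y)]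
    (X : Paths V ⥤ Type) : Paths V ⥤ Type where
  obj y := Σ x : Paths V, X.obj x × Shrink.{0} (x ⟶ y)
  map p := ↾(fun d => ⟨d.1, d.2.1, equivShrink _ ((equivShrink _).symm d.2.2 ≫ p)⟩)
  map_id y := by
    refine ConcreteCategory.hom_ext _ _ (fun d => ?_)
    change (⟨d.1, d.2.1, equivShrink _ ((equivShrink _).symm d.2.2 ≫ 𝟙 y)⟩ :
      Σ x : Paths V, X.obj x × Shrink.{0} (x ⟶ y)) = d
    simp
  map_comp {a b c} p q := by
    refine ConcreteCategory.hom_ext _ _ (fun d => ?_)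
    change (⟨d.1, d.2.1, equivShrink _ ((equivShrink _).symm d.2.2 ≫ p ≫ q)⟩ :
      Σ x : Paths V, X.obj x × Shrink.{0} (x ⟶ c)) = ⟨d.1, d.2.1, equivShrink _ ((equivShrink _).symm
        (equivShrink _ ((equivShrink _).symm d.2.2 ≫ p)) ≫ q)⟩
    simp

/-- The canonical map from the cover. -/
noncomputable def coverMap {V : Type} [Quiver.{u} V] [∀ x y : Paths V, Small.{0} (x ⟶ y)]
    (X : Paths V ⥤ Type) : cover X ⟶ X where
  app y := ↾(fun d => X.map ((equivShrink _).symm d.2.2) d.2.1)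
  naturality a b p := by
    refine ConcreteCategory.hom_ext _ _ (fun d => ?_)
    change X.map ((equivShrink _).symm (equivShrink _ ((equivShrink _).symm d.2.2 ≫ p))) d.2.1 =
      X.map p (X.map ((equivShrink _).symm d.2.2) d.2.1)
    simp

lemma coverMap_epi {V : Type} [Quiver.{u} V] [∀ x y : Paths V, Small.{0} (x ⟶ y)]
    (X : Paths V ⥤ Type) : Epi (coverMap X) := by
  rw [NatTrans.epi_iff_epi_app]
  intro y
  rw [epi_iff_surjective]
  intro z
  refine ⟨⟨y, z, equivShrink _ (𝟙 y)⟩, ?_⟩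
  change X.map ((equivShrink _).symm (equivShrink _ (𝟙 y))) z = z
  simp

lemma cover_isFree {V : Type} [Quiver.{u} V] [∀ x y : Paths V, Small.{0} (x ⟶ y)]
    (X : Paths V ⥤ Type) : IsFree (cover X) := by
  rintro y ⟨x, a, ⟨v, s, p⟩⟩ ⟨x', a', ⟨v', s', p'⟩⟩ h
  obtain ⟨p, rfl⟩ := (equivShrink _).surjective p
  obtain ⟨p', rfl⟩ := (equivShrink _).surjective p'
  obtain ⟨hv, h⟩ := Sigma.mk.inj h
  cases hv
  obtain ⟨hs, h⟩ := Prod.mk.inj (eq_of_heq h)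
  cases hs
  have h := (equivShrink _).injective h
  simp only [Equiv.symm_apply_apply] at h
  obtain ⟨hx, h1, h2⟩ := Quiver.Path.cons.inj h
  cases hx
  cases h1
  cases h2
  rfl

lemma IsFree.tensor {V : Type} [Quiver.{u} V] {S T : Paths V ⥤ Type} (hS : IsFree S)
    (hT : IsFree T) : IsFree (S ⊗ T) := by
  rintro y ⟨x, a, s, t⟩ ⟨x', a', s', t'⟩ h
  have h1 : push S y ⟨x, a, s⟩ = push S y ⟨x', a', s'⟩ := congrArg Prod.fst h
  have h2 : push T y ⟨x, a, t⟩ = push T y ⟨x', a', t'⟩ := congrArg Prod.snd h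
  have h1 := hS y h1
  have h2 := hT y h2
  cases h1
  cases h2
  rfl

/-- The pointwise free representation. -/
noncomputable abbrev lin (K : Type) [Field K] (V : Type) [Quiver.{u} V] :
    (Paths V ⥤ Type) ⥤ (Paths V ⥤ ModuleCat.{0} K) :=
  (Functor.whiskeringRight _ _ _).obj (ModuleCat.free K)

/-- The pointwise free-forgetful adjunction. -/
noncomputable def linAdj (K : Type) [Field K] (V : Type) [Quiver.{u} V] :
    lin K V ⊣ (Functor.whiskeringRight _ _ _).obj (forget (ModuleCat.{0} K)) :=
  (ModuleCat.adj K).whiskerRight _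

lemma lin_projective (K : Type) [Field K] {V : Type} [Quiver.{u} V] {S : Paths V ⥤ Type}
    (hS : Projective S) : Projective ((lin K V).obj S) := by
  have : ((Functor.whiskeringRight (Paths V) _ _).obj
      (forget (ModuleCat.{0} K))).PreservesEpimorphisms := ⟨fun f hf => by
    rw [NatTrans.epi_iff_epi_app] at hf ⊢
    intro y
    haveI := hf y
    exact inferInstanceAs (Epi ((forget (ModuleCat.{0} K)).map (f.app y)))⟩
  exact (linAdj K V).map_projective _ hS

/-- Free representations are compatible with tensor products. -/
noncomputable def linTensor (K : Type) [Field K] {V : Type} [Quiver.{u} V]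
    (S T : Paths V ⥤ Type) :
    (lin K V).obj S ⊗ (lin K V).obj T ≅ (lin K V).obj (S ⊗ T) :=
  NatIso.ofComponents (fun y => Functor.Monoidal.μIso (ModuleCat.free K) (S.obj y) (T.obj y))
    (fun p => Functor.LaxMonoidal.μ_natural (ModuleCat.free K) (S.map p) (T.map p))

lemma exists_retract (K : Type) [Field K] {V : Type} [Quiver.{u} V]
    [∀ x y : Paths V, Small.{0} (x ⟶ y)] (X : Paths V ⥤ ModuleCat.{0} K) (hX : Projective X) :
    ∃ S : Paths V ⥤ Type, IsFree S ∧ Nonempty (Retract X ((lin K V).obj S)) := by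
  let S := cover (X ⋙ forget _)
  have : Epi (coverMap (X ⋙ forget _)) := coverMap_epi _
  have : Epi ((lin K V).map (coverMap (X ⋙ forget _))) :=
    haveI := (linAdj K V).isLeftAdjoint
    inferInstance
  have : Epi ((linAdj K V).counit.app X) := inferInstance
  let π : (lin K V).obj S ⟶ X :=
    (lin K V).map (coverMap (X ⋙ forget _)) ≫ (linAdj K V).counit.app X
  have : Epi π := epi_comp _ _
  exact ⟨S, cover_isFree _, ⟨⟨Projective.factorThru (𝟙 X) π, π, Projective.factorThru_comp _ _⟩⟩⟩

end QuiverTensor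

/-- For a finite acyclic quiver `Q` and field `K`, the pointwise tensor
product of two projective representations (with finite-dimensional values) is projective. -/
theorem tensor_projective_of_projective
    (K : Type) [Field K] (V : Type) [Quiver V] [Fintype V]
    [∀ a b : V, Fintype (a ⟶ b)]
    (hacyclic : ∀ (v : V) (p : Quiver.Path v v), p.length = 0)
    (X Y : Paths V ⥤ ModuleCat K)
    (hXfd : ∀ v : Paths V, FiniteDimensional K (X.obj v))
    (hYfd : ∀ v : Paths V, FiniteDimensional K (Y.obj v))
    (hX : Projective X) (hY : Projective Y) :
    Projective (X ⊗ Y) := by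
  have : ∀ a b : V, Small.{0} (a ⟶ b) := fun a b => Countable.toSmall _
  have : ∀ x y : Paths V, Small.{0} (x ⟶ y) := QuiverTensor.small_path
  obtain ⟨S, hS, ⟨rX⟩⟩ := QuiverTensor.exists_retract K X hX
  obtain ⟨T, hT, ⟨rY⟩⟩ := QuiverTensor.exists_retract K Y hY
  have : Projective ((QuiverTensor.lin K V).obj S ⊗ (QuiverTensor.lin K V).obj T) :=
    Projective.of_iso (QuiverTensor.linTensor K S T).symm
      (QuiverTensor.lin_projective K ((hS.tensor hT).projective hacyclic))
  have r : Retract (X ⊗ Y) ((QuiverTensor.lin K V).obj S ⊗ (QuiverTensor.lin K V).obj T) :=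
    { i := rX.i ⊗ₘ rY.i
      r := rX.r ⊗ₘ rY.r
      retract := by rw [MonoidalCategory.tensorHom_comp_tensorHom, rX.retract, rY.retract, MonoidalCategory.id_tensorHom_id] }
  exact r.projective
end

section
/- Let Q be a finite acyclic quiver and i a vertex of Q; let P = P_{Q,i} as a quiver over Q. Then every connected component of P ×_Q P contains exactly one vertex (p, q) such that p and q are paths from i with a common terminal vertex j that are either both trivial or have distinct last arrows; this vertex is the unique source of its component, and the component is isomorphic over Q to P_{W,j}, where W is the successor closure of j in Q (the subquiver of Q whose vertices are the terminal vertices of paths starting at j, with all arrows of Q between such vertices). -/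
/-! ## Bundled quivers and quivers over a fixed quiver -/

/-- A (bundled) quiver: a set of vertices, a set of arrows, and source/target maps. -/
structure BQuiv : Type 1 where
  V : Type
  E : Type
  s : E → V
  t : E → V

namespace BQuiv

/-- A morphism of quivers (a "coloring"). -/
@[ext]
structure Hom (A B : BQuiv) where
  onV : A.V → B.V
  onE : A.E → B.E
  hs : ∀ e : A.E, B.s (onE e) = onV (A.s e)
  ht : ∀ e : A.E, B.t (onE e) = onV (A.t e)

/-- Composition of morphisms of quivers. -/
def Hom.comp {A B C : BQuiv} (f : Hom A B) (g : Hom B C) : Hom A C where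
  onV v := g.onV (f.onV v)
  onE e := g.onE (f.onE e)
  hs e := by rw [g.hs, f.hs]
  ht e := by rw [g.ht, f.ht]

/-- `Q.IsPathFrom a b es` : the list of edges `es` forms a path from `a` to `b` in `Q`. -/
def IsPathFrom (Q : BQuiv) : Q.V → Q.V → List Q.E → Prop
  | a, b, [] => a = b
  | a, b, e :: es => Q.s e = a ∧ Q.IsPathFrom (Q.t e) b es

theorem IsPathFrom.snoc {Q : BQuiv} {a b : Q.V} {es : List Q.E}
    (h : Q.IsPathFrom a b es) {e : Q.E} (he : Q.s e = b) :
    Q.IsPathFrom a (Q.t e) (es ++ [e]) := by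
  induction es generalizing a with
  | nil =>
      simp only [IsPathFrom] at h
      subst h
      exact ⟨he, rfl⟩
  | cons f fs ih =>
      obtain ⟨h1, h2⟩ := h
      exact ⟨h1, ih h2⟩

theorem IsPathFrom.append {Q : BQuiv} {a b c : Q.V} {es fs : List Q.E}
    (h : Q.IsPathFrom a b es) (h' : Q.IsPathFrom b c fs) :
    Q.IsPathFrom a c (es ++ fs) := by
  induction es generalizing a with
  | nil =>
      simp only [IsPathFrom] at h
      subst h
      exact h'
  | cons f gs ih =>
      obtain ⟨h1, h2⟩ := h
      exact ⟨h1, ih h2⟩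

/-- `Q` is acyclic if every path from a vertex to itself is trivial. -/
def IsAcyclic (Q : BQuiv) : Prop :=
  ∀ (v : Q.V) (es : List Q.E), Q.IsPathFrom v v es → es = []

/-! ## Subquivers -/

/-- A subquiver of `Q`: a subset of vertices and a subset of arrows with endpoints in it. -/
structure Sub (Q : BQuiv) where
  verts : Set Q.V
  edges : Set Q.E
  src_mem : ∀ e ∈ edges, Q.s e ∈ verts
  tgt_mem : ∀ e ∈ edges, Q.t e ∈ verts

/-- The quiver underlying a subquiver. -/
def Sub.toBQuiv {Q : BQuiv} (T : Sub Q) : BQuiv where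
  V := T.verts
  E := T.edges
  s e := ⟨Q.s e.1, T.src_mem e.1 e.2⟩
  t e := ⟨Q.t e.1, T.tgt_mem e.1 e.2⟩

/-- The inclusion of a subquiver; `E_T` is `(T.toBQuiv, T.incl)` as a quiver over `Q`. -/
def Sub.incl {Q : BQuiv} (T : Sub Q) : Hom T.toBQuiv Q where
  onV := Subtype.val
  onE := Subtype.val
  hs _ := rfl
  ht _ := rfl

/-- `T.IsPathIn a b es` : `es` is a path from `a` to `b` lying entirely in the
subquiver `T`. -/
def Sub.IsPathIn {Q : BQuiv} (T : Sub Q) (a b : Q.V) (es : List Q.E) : Prop :=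
  a ∈ T.verts ∧ Q.IsPathFrom a b es ∧ ∀ e ∈ es, e ∈ T.edges

/-- Intersection of subquivers. -/
def Sub.inter {Q : BQuiv} (S T : Sub Q) : Sub Q where
  verts := S.verts ∩ T.verts
  edges := S.edges ∩ T.edges
  src_mem e he := ⟨S.src_mem e he.1, T.src_mem e he.2⟩
  tgt_mem e he := ⟨S.tgt_mem e he.1, T.tgt_mem e he.2⟩

/-- The full subquiver (all of `Q`). -/
def fullSub (Q : BQuiv) : Sub Q where
  verts := Set.univ
  edges := Set.univ
  src_mem _ _ := trivial
  tgt_mem _ _ := trivial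

/-- `S ⊆ T` for subquivers. -/
def Sub.le {Q : BQuiv} (S T : Sub Q) : Prop :=
  S.verts ⊆ T.verts ∧ S.edges ⊆ T.edges

/-- The successor closure of a vertex `j` in a subquiver `U`: the vertices of `U`
reachable from `j` by a path in `U`, together with all arrows of `U` between them. -/
def succClosure {Q : BQuiv} (U : Sub Q) (j : Q.V) : Sub Q where
  verts := {v | ∃ es, U.IsPathIn j v es}
  edges := {e | e ∈ U.edges ∧ (∃ es, U.IsPathIn j (Q.s e) es) ∧ ∃ es, U.IsPathIn j (Q.t e) es}
  src_mem _ he := he.2.1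
  tgt_mem _ he := he.2.2

/-- `s₀` is the unique source of the subquiver `S`. -/
def Sub.IsUniqueSource {Q : BQuiv} (S : Sub Q) (s₀ : Q.V) : Prop :=
  s₀ ∈ S.verts ∧ (∀ e ∈ S.edges, Q.t e ≠ s₀) ∧
    ∀ v ∈ S.verts, (∀ e ∈ S.edges, Q.t e ≠ v) → v = s₀

/-- `u₀` is the unique sink of the subquiver `S`. -/
def Sub.IsUniqueSink {Q : BQuiv} (S : Sub Q) (u₀ : Q.V) : Prop :=
  u₀ ∈ S.verts ∧ (∀ e ∈ S.edges, Q.s e ≠ u₀) ∧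
    ∀ v ∈ S.verts, (∀ e ∈ S.edges, Q.s e ≠ v) → v = u₀

/-! ## Path and copath quivers -/

/-- The path quiver `P_{T,t}`: vertices are the paths in `T` starting at `t` (recorded as
a pair (endpoint, list of edges)); there is one arrow `p ⟶ p·α` for each path-vertex `p`
and each arrow `α` of `T` starting at the endpoint of `p`. -/
def PathQ {Q : BQuiv} (T : Sub Q) (t : Q.V) : BQuiv where
  V := {x : Q.V × List Q.E // T.IsPathIn t x.1 x.2}
  E := {y : (Q.V × List Q.E) × Q.E //
        T.IsPathIn t y.1.1 y.1.2 ∧ y.2 ∈ T.edges ∧ Q.s y.2 = y.1.1}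
  s y := ⟨y.1.1, y.2.1⟩
  t y := ⟨(Q.t y.1.2, y.1.1.2 ++ [y.1.2]),
    ⟨y.2.1.1, (y.2.1.2.1).snoc y.2.2.2, by
      intro e he
      rcases List.mem_append.1 he with h | h
      · exact y.2.1.2.2 e h
      · rw [List.mem_singleton.1 h]; exact y.2.2.1⟩⟩

/-- The structure map of the path quiver `P_{T,t}` as a quiver over `Q`: a path is sent
to its terminal vertex, and the arrow `(p, α)` to `α`. -/
def pathPi {Q : BQuiv} (T : Sub Q) (t : Q.V) : Hom (PathQ T t) Q where
  onV p := p.1.1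
  onE y := y.1.2
  hs y := y.2.2.2
  ht _ := rfl

/-- The copath quiver `I_{T,u}`: vertices are the paths in `T` ending at `u` (recorded as
a pair (starting vertex, list of edges)); there is one arrow `α·q ⟶ q` for each vertex `q`
and each arrow `α` of `T` ending at the starting vertex of `q`. -/
def CoPathQ {Q : BQuiv} (T : Sub Q) (u : Q.V) : BQuiv where
  V := {x : Q.V × List Q.E // T.IsPathIn x.1 u x.2}
  E := {y : Q.E × (Q.V × List Q.E) //
        T.IsPathIn y.2.1 u y.2.2 ∧ y.1 ∈ T.edges ∧ Q.t y.1 = y.2.1}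
  s y := ⟨(Q.s y.1.1, y.1.1 :: y.1.2.2),
    ⟨T.src_mem _ y.2.2.1, ⟨rfl, by rw [y.2.2.2]; exact y.2.1.2.1⟩, by
      intro e he
      rcases List.mem_cons.1 he with h | h
      · rw [h]; exact y.2.2.1
      · exact y.2.1.2.2 e h⟩⟩
  t y := ⟨y.1.2, y.2.1⟩

/-- The structure map of the copath quiver `I_{T,u}` as a quiver over `Q`: a path is sent
to its starting vertex, and the arrow `(α, q)` to `α`. -/
def coPathPi {Q : BQuiv} (T : Sub Q) (u : Q.V) : Hom (CoPathQ T u) Q where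
  onV p := p.1.1
  onE y := y.1.1
  hs _ := rfl
  ht y := y.2.2.2

/-! ## Fiber products -/

/-- The fiber product of two quivers over `Q`. -/
def Fib {Q Q' Q'' : BQuiv} (f' : Hom Q' Q) (f'' : Hom Q'' Q) : BQuiv where
  V := {p : Q'.V × Q''.V // f'.onV p.1 = f''.onV p.2}
  E := {e : Q'.E × Q''.E // f'.onE e.1 = f''.onE e.2}
  s e := ⟨(Q'.s e.1.1, Q''.s e.1.2), by rw [← f'.hs, ← f''.hs, e.2]⟩
  t e := ⟨(Q'.t e.1.1, Q''.t e.1.2), by rw [← f'.ht, ← f''.ht, e.2]⟩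

/-- The structure map of the fiber product as a quiver over `Q`. -/
def fibHom {Q Q' Q'' : BQuiv} (f' : Hom Q' Q) (f'' : Hom Q'' Q) : Hom (Fib f' f'') Q where
  onV p := f'.onV p.1.1
  onE e := f'.onE e.1.1
  hs e := f'.hs e.1.1
  ht e := f'.ht e.1.1

/-! ## Connected components -/

/-- Adjacency in the underlying undirected graph. -/
def Adj (X : BQuiv) (v w : X.V) : Prop :=
  ∃ e : X.E, (X.s e = v ∧ X.t e = w) ∨ (X.s e = w ∧ X.t e = v)

/-- Connectivity in the underlying undirected graph. -/
def Conn (X : BQuiv) : X.V → X.V → Prop :=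
  Relation.ReflTransGen (Adj X)

/-- The connected component of the vertex `v₀` in `X`, as a quiver. -/
def Component (X : BQuiv) (v₀ : X.V) : BQuiv where
  V := {v : X.V // Conn X v₀ v}
  E := {e : X.E // Conn X v₀ (X.s e)}
  s e := ⟨X.s e.1, e.2⟩
  t e := ⟨X.t e.1, e.2.tail ⟨e.1, Or.inl ⟨rfl, rfl⟩⟩⟩

/-- The inclusion of a connected component. -/
def Component.incl (X : BQuiv) (v₀ : X.V) : Hom (Component X v₀) X where
  onV := Subtype.val
  onE := Subtype.val
  hs _ := rfl
  ht _ := rfl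

/-- A connected component of a quiver over `Q`, regarded as a quiver over `Q` via the
restricted structure map. -/
def componentHom {X Q : BQuiv} (h : Hom X Q) (v₀ : X.V) : Hom (Component X v₀) Q :=
  (Component.incl X v₀).comp h

/-! ## Isomorphisms over `Q` and wrappings -/

/-- An isomorphism of quivers over `Q`: a morphism of quivers commuting with the
structure maps which is bijective on vertices and on arrows. -/
structure OverIso {A B Q : BQuiv} (f : Hom A Q) (g : Hom B Q) where
  hom : Hom A B
  comm : hom.comp g = f
  bijV : Function.Bijective hom.onV
  bijE : Function.Bijective hom.onE

/-- A morphism of quivers is a wrapping if it is injective on parallel arrows. -/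
def IsWrapping {A B : BQuiv} (f : Hom A B) : Prop :=
  ∀ e₁ e₂ : A.E, A.s e₁ = A.s e₂ → A.t e₁ = A.t e₂ → f.onE e₁ = f.onE e₂ → e₁ = e₂

/-! ## Linear quivers tracing a path -/

/-- The linear quiver with vertices `0, 1, …, n` and one arrow `k-1 ⟶ k` for `1 ≤ k ≤ n`. -/
def LinQ (n : ℕ) : BQuiv where
  V := Fin (n + 1)
  E := Fin n
  s := Fin.castSucc
  t := Fin.succ

/-- The vertex reached after `k` steps along a list of edges starting at `a`. -/
def vertAt (Q : BQuiv) : Q.V → List Q.E → ℕ → Q.V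
  | a, _, 0 => a
  | a, [], _ + 1 => a
  | _, e :: es, k + 1 => vertAt Q (Q.t e) es k

theorem vertAt_s {Q : BQuiv} {a b : Q.V} {es : List Q.E} (h : Q.IsPathFrom a b es)
    (k : Fin es.length) : Q.s (es.get k) = vertAt Q a es k.1 := by
  induction es generalizing a with
  | nil => exact absurd k.2 (by simp)
  | cons e es ih =>
      obtain ⟨h1, h2⟩ := h
      rcases k with ⟨k, hk⟩
      cases k with
      | zero => exact h1
      | succ k => exact ih h2 ⟨k, Nat.lt_of_succ_lt_succ hk⟩

theorem vertAt_t {Q : BQuiv} {a b : Q.V} {es : List Q.E} (h : Q.IsPathFrom a b es)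
    (k : Fin es.length) : Q.t (es.get k) = vertAt Q a es (k.1 + 1) := by
  induction es generalizing a with
  | nil => exact absurd k.2 (by simp)
  | cons e es ih =>
      obtain ⟨h1, h2⟩ := h
      rcases k with ⟨k, hk⟩
      cases k with
      | zero =>
          cases es with
          | nil => rfl
          | cons f fs => exact (vertAt_s h2 ⟨0, by simp⟩) ▸ (h2.1).symm ▸ rfl
      | succ k => exact ih h2 ⟨k, Nat.lt_of_succ_lt_succ hk⟩

/-- The linear quiver of length `es.length` tracing the path `es` from `a` to `b`,
as a quiver over `Q`. -/
def traceHom (Q : BQuiv) (a b : Q.V) (es : List Q.E) (h : Q.IsPathFrom a b es) :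
    Hom (LinQ es.length) Q where
  onV k := vertAt Q a es k.1
  onE k := es.get k
  hs k := vertAt_s h k
  ht k := vertAt_t h k

end BQuiv

open BQuiv

/-- A vertex `(p, q)` of `P_{Q,i} ×_Q P_{Q,i}` is special if `p` and `q` are either both
trivial or have distinct last arrows. -/
def SpecialVertex (Q : BQuiv) (i : Q.V)
    (v : (Fib (pathPi (fullSub Q) i) (pathPi (fullSub Q) i)).V) : Prop :=
  (v.1.1.1.2 = [] ∧ v.1.2.1.2 = []) ∨
    (v.1.1.1.2 ≠ [] ∧ v.1.2.1.2 ≠ [] ∧ v.1.1.1.2.getLast? ≠ v.1.2.1.2.getLast?)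

namespace BQuiv

theorem IsPathFrom.split {Q : BQuiv} {a b c : Q.V} {es fs : List Q.E}
    (h : Q.IsPathFrom a b es) (h' : Q.IsPathFrom a c (es ++ fs)) :
    Q.IsPathFrom b c fs := by
  induction es generalizing a with
  | nil =>
      simp only [IsPathFrom] at h
      subst h
      exact h'
  | cons f gs ih => exact ih h.2 h'.2

theorem IsPathFrom.exists_split {Q : BQuiv} {a c : Q.V} {es fs : List Q.E}
    (h' : Q.IsPathFrom a c (es ++ fs)) :
    ∃ b, Q.IsPathFrom a b es ∧ Q.IsPathFrom b c fs := by
  induction es generalizing a with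
  | nil => exact ⟨a, rfl, h'⟩
  | cons f gs ih =>
      obtain ⟨b, h1, h2⟩ := ih h'.2
      exact ⟨b, ⟨h'.1, h1⟩, h2⟩

theorem IsPathFrom.unique {Q : BQuiv} {a b c : Q.V} {es : List Q.E}
    (h : Q.IsPathFrom a b es) (h' : Q.IsPathFrom a c es) : b = c := by
  have : Q.IsPathFrom b c [] := h.split (by simpa using h')
  exact this

theorem IsPathFrom.succ {Q : BQuiv} {j b : Q.V} {r : List Q.E}
    (h : Q.IsPathFrom j b r) : (succClosure (fullSub Q) j).IsPathIn j b r := by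
  refine ⟨⟨[], trivial, rfl, by simp⟩, h, ?_⟩
  intro e he
  obtain ⟨l1, l2, rfl⟩ := List.append_of_mem he
  obtain ⟨c, h1, h2⟩ := h.exists_split
  have hs : Q.s e = c := h2.1
  refine ⟨trivial, ⟨l1, trivial, hs ▸ h1, fun _ _ => trivial⟩,
    ⟨l1 ++ [e], trivial, h1.snoc hs, fun _ _ => trivial⟩⟩

theorem Conn.symm' {X : BQuiv} {v w : X.V} (h : Conn X v w) : Conn X w v := by
  induction h with
  | refl => exact Relation.ReflTransGen.refl
  | tail _ hadj ih =>
    obtain ⟨e, he⟩ := hadj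
    exact Relation.ReflTransGen.head ⟨e, he.symm⟩ ih

/-- The fibre square of the path quiver. -/
abbrev PP (Q : BQuiv) (i : Q.V) : BQuiv :=
  Fib (pathPi (fullSub Q) i) (pathPi (fullSub Q) i)

theorem PP.conn_edge {Q : BQuiv} {i : Q.V} (e : (PP Q i).E) :
    Conn (PP Q i) ((PP Q i).s e) ((PP Q i).t e) :=
  Relation.ReflTransGen.single ⟨e, Or.inl ⟨rfl, rfl⟩⟩

theorem PathQ.vext {Q : BQuiv} {T : Sub Q} {i : Q.V} {v w : (PathQ T i).V}
    (h : v.1.2 = w.1.2) : v = w := by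
  obtain ⟨⟨a, l⟩, hv⟩ := v
  obtain ⟨⟨b, m⟩, hw⟩ := w
  simp only at h
  subst h
  have : a = b := hv.2.1.unique hw.2.1
  subst this
  rfl

theorem PP.vext {Q : BQuiv} {i : Q.V} {v w : (PP Q i).V}
    (h1 : v.1.1.1.2 = w.1.1.1.2) (h2 : v.1.2.1.2 = w.1.2.1.2) : v = w :=
  Subtype.ext (Prod.ext (PathQ.vext h1) (PathQ.vext h2))

/-- The vertex obtained from `v` by appending a path. -/
def PP.app {Q : BQuiv} {i : Q.V} (v : (PP Q i).V) (b : Q.V) (r : List Q.E)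
    (h : Q.IsPathFrom v.1.1.1.1 b r) : (PP Q i).V :=
  ⟨(⟨(b, v.1.1.1.2 ++ r), trivial, v.1.1.2.2.1.append h, fun _ _ => trivial⟩,
    ⟨(b, v.1.2.1.2 ++ r), trivial, v.1.2.2.2.1.append
      ((show v.1.1.1.1 = v.1.2.1.1 from v.2) ▸ h), fun _ _ => trivial⟩), rfl⟩

/-- The edge from `v` by an arrow. -/
def PP.edge {Q : BQuiv} {i : Q.V} (v : (PP Q i).V) (e : Q.E)
    (h : Q.s e = v.1.1.1.1) : (PP Q i).E :=
  ⟨(⟨(v.1.1.1, e), v.1.1.2, trivial, h⟩,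
    ⟨(v.1.2.1, e), v.1.2.2, trivial, h.trans v.2⟩), rfl⟩

theorem PP.conn_app {Q : BQuiv} {i : Q.V} (v : (PP Q i).V) (r : List Q.E) :
    ∀ (b : Q.V) (h : Q.IsPathFrom v.1.1.1.1 b r), Conn (PP Q i) v (PP.app v b r h) := by
  induction r using List.reverseRecOn with
  | nil =>
    intro b h
    have : v = PP.app v b [] h := PP.vext (by simp [PP.app]) (by simp [PP.app])
    rw [← this]
    exact Relation.ReflTransGen.refl
  | append_singleton l e ih =>
    intro b h
    obtain ⟨c, h1, h2, h3⟩ := h.exists_split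
    refine (ih c h1).trans ?_
    have : PP.app v b (l ++ [e]) h = (PP Q i).t (PP.edge (PP.app v c l h1) e h2) :=
      PP.vext (List.append_assoc _ _ _).symm (List.append_assoc _ _ _).symm
    rw [this]
    exact PP.conn_edge (PP.edge (PP.app v c l h1) e h2)

theorem PP.exists_edge {Q : BQuiv} {i : Q.V} (v : (PP Q i).V) {p q : List Q.E} {e : Q.E}
    (h1 : v.1.1.1.2 = p ++ [e]) (h2 : v.1.2.1.2 = q ++ [e]) :
    ∃ f : (PP Q i).E, (PP Q i).t f = v ∧ ((PP Q i).s f).1.1.1.2 = p := by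
  have hp : Q.IsPathFrom i v.1.1.1.1 (p ++ [e]) := h1 ▸ v.1.1.2.2.1
  have hq : Q.IsPathFrom i v.1.2.1.1 (q ++ [e]) := h2 ▸ v.1.2.2.2.1
  obtain ⟨c, hc, hc'⟩ := hp.exists_split
  obtain ⟨d, hd, hd'⟩ := hq.exists_split
  refine ⟨⟨(⟨((c, p), e), ⟨trivial, hc, fun _ _ => trivial⟩, trivial, hc'.1⟩,
    ⟨((d, q), e), ⟨trivial, hd, fun _ _ => trivial⟩, trivial, hd'.1⟩), rfl⟩, ?_, rfl⟩
  exact PP.vext h1.symm h2.symm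

theorem PP.t_lists {Q : BQuiv} {i : Q.V} (f : (PP Q i).E) :
    ∃ e, ((PP Q i).t f).1.1.1.2 = ((PP Q i).s f).1.1.1.2 ++ [e] ∧
      ((PP Q i).t f).1.2.1.2 = ((PP Q i).s f).1.2.1.2 ++ [e] := by
  refine ⟨f.1.1.1.2, rfl, ?_⟩
  have : f.1.1.1.2 = f.1.2.1.2 := f.2
  rw [this]
  rfl

theorem trivial_of_fst {Q : BQuiv} (hQ : Q.IsAcyclic) {i b : Q.V} {l : List Q.E}
    (h : Q.IsPathFrom i b []) (h' : Q.IsPathFrom i b l) : l = [] := by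
  have : i = b := h
  subst this
  exact hQ _ _ h'

end BQuiv

theorem SpecialVertex.of_source {Q : BQuiv} (hQ : Q.IsAcyclic) {i : Q.V} (v : (PP Q i).V)
    (h : ∀ e, (PP Q i).t e ≠ v) : SpecialVertex Q i v := by
  have hp : Q.IsPathFrom i v.1.1.1.1 v.1.1.1.2 := v.1.1.2.2.1
  have hq : Q.IsPathFrom i v.1.1.1.1 v.1.2.1.2 := by
    have h2 : v.1.1.1.1 = v.1.2.1.1 := v.2
    rw [h2]; exact v.1.2.2.2.1
  unfold SpecialVertex
  rcases List.eq_nil_or_concat' v.1.1.1.2 with h1 | ⟨p, e, h1⟩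
  · left
    exact ⟨h1, trivial_of_fst hQ (h1 ▸ hp) hq⟩
  · rcases List.eq_nil_or_concat' v.1.2.1.2 with h2 | ⟨q, f, h2⟩
    · left
      exact ⟨trivial_of_fst hQ (h2 ▸ hq) hp, h2⟩
    · right
      refine ⟨by simp [h1], by simp [h2], ?_⟩
      rw [h1, h2]
      simp only [List.getLast?_append, List.getLast?_singleton]
      intro hef
      have hef : e = f := by simpa using hef
      subst hef
      obtain ⟨g, hg, -⟩ := PP.exists_edge v h1 h2
      exact h g hg

theorem SpecialVertex.not_concat {Q : BQuiv} {i : Q.V} {v : (PP Q i).V}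
    (h : SpecialVertex Q i v) {p q : List Q.E} {e : Q.E}
    (h1 : v.1.1.1.2 = p ++ [e]) (h2 : v.1.2.1.2 = q ++ [e]) : False := by
  unfold SpecialVertex at h
  rw [h1, h2] at h
  simp at h

theorem SpecialVertex.source {Q : BQuiv} {i : Q.V} {v : (PP Q i).V}
    (h : SpecialVertex Q i v) (e : (PP Q i).E) : (PP Q i).t e ≠ v := by
  rintro rfl
  obtain ⟨e, h1, h2⟩ := PP.t_lists e
  exact h.not_concat h1 h2

theorem SpecialVertex.exists_conn {Q : BQuiv} (hQ : Q.IsAcyclic) {i : Q.V} (n : ℕ) :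
    ∀ v : (PP Q i).V, v.1.1.1.2.length = n →
      ∃ w, Conn (PP Q i) v w ∧ SpecialVertex Q i w := by
  induction n with
  | zero =>
    intro v hv
    refine ⟨v, Relation.ReflTransGen.refl, SpecialVertex.of_source hQ v ?_⟩
    rintro f rfl
    obtain ⟨e, h1, h2⟩ := PP.t_lists f
    rw [h1] at hv
    simp at hv
  | succ n ih =>
    intro v hv
    by_cases h : ∀ e, (PP Q i).t e ≠ v
    · exact ⟨v, Relation.ReflTransGen.refl, SpecialVertex.of_source hQ v h⟩
    · push Not at h
      obtain ⟨f, rfl⟩ := h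
      obtain ⟨e, h1, h2⟩ := PP.t_lists f
      rw [h1] at hv
      obtain ⟨w, hw, hs⟩ := ih ((PP Q i).s f) (by simpa using hv)
      exact ⟨w, (PP.conn_edge f).symm'.trans hw, hs⟩

theorem SpecialVertex.lists {Q : BQuiv} {i : Q.V} {v w : (PP Q i).V}
    (h : SpecialVertex Q i v) (hc : Conn (PP Q i) v w) :
    ∃ r, w.1.1.1.2 = v.1.1.1.2 ++ r ∧ w.1.2.1.2 = v.1.2.1.2 ++ r := by
  induction hc with
  | refl => exact ⟨[], by simp, by simp⟩
  | tail _ hadj ih =>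
    obtain ⟨r, hr1, hr2⟩ := ih
    obtain ⟨f, ⟨rfl, rfl⟩ | ⟨rfl, rfl⟩⟩ := hadj
    · obtain ⟨e, h1, h2⟩ := PP.t_lists f
      exact ⟨r ++ [e], by rw [h1, hr1, List.append_assoc], by rw [h2, hr2, List.append_assoc]⟩
    · obtain ⟨e, h1, h2⟩ := PP.t_lists f
      rw [h1] at hr1
      rw [h2] at hr2
      rcases List.eq_nil_or_concat' r with rfl | ⟨r, g, rfl⟩
      · exact (h.not_concat (by simpa using hr1.symm) (by simpa using hr2.symm)).elim
      · rw [← List.append_assoc] at hr1 hr2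
        exact ⟨r, (List.append_inj' hr1 rfl).1, (List.append_inj' hr2 rfl).1⟩

theorem SpecialVertex.eq_app {Q : BQuiv} {i : Q.V} {v w : (PP Q i).V}
    (h : SpecialVertex Q i v) (hc : Conn (PP Q i) v w) :
    ∃ r hr, w = PP.app v w.1.1.1.1 r hr := by
  obtain ⟨r, h1, h2⟩ := h.lists hc
  have hw : Q.IsPathFrom i w.1.1.1.1 (v.1.1.1.2 ++ r) := h1 ▸ w.1.1.2.2.1
  exact ⟨r, v.1.1.2.2.1.split hw, PP.vext h1 h2⟩

theorem SpecialVertex.uniq {Q : BQuiv} {i : Q.V} {v w : (PP Q i).V}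
    (h : SpecialVertex Q i v) (hc : Conn (PP Q i) v w) (hw : SpecialVertex Q i w) : w = v := by
  obtain ⟨r, h1, h2⟩ := h.lists hc
  rcases List.eq_nil_or_concat' r with rfl | ⟨r, g, rfl⟩
  · exact PP.vext (by simpa using h1) (by simpa using h2)
  · rw [← List.append_assoc] at h1 h2
    exact (hw.not_concat h1 h2).elim

/-- An isomorphism over `Q` can be given by its inverse. -/
theorem BQuiv.OverIso.ofInv {A B Q : BQuiv} {f : Hom A Q} {g : Hom B Q} (φ : Hom B A)
    (hφ : φ.comp f = g) (hV : Function.Bijective φ.onV) (hE : Function.Bijective φ.onE) :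
    Nonempty (OverIso f g) := by
  let eV := Equiv.ofBijective _ hV
  let eE := Equiv.ofBijective _ hE
  subst hφ
  have hv : ∀ x, φ.onV (eV.symm x) = x := eV.apply_symm_apply
  have he : ∀ x, φ.onE (eE.symm x) = x := eE.apply_symm_apply
  refine ⟨⟨⟨eV.symm, eE.symm, ?_, ?_⟩, ?_, eV.symm.bijective, eE.symm.bijective⟩⟩
  · intro e
    apply hV.1
    rw [← φ.hs, he, hv]
  · intro e
    apply hV.1
    rw [← φ.ht, he, hv]
  · ext x
    · simp [Hom.comp, hv]
    · simp [Hom.comp, he]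

/-- The map from the path quiver to the component. -/
def compMap {Q : BQuiv} {i : Q.V} (v₀ v : (PP Q i).V) (hc : Conn (PP Q i) v₀ v) :
    Hom (PathQ (succClosure (fullSub Q) v.1.1.1.1) v.1.1.1.1) (Component (PP Q i) v₀) where
  onV x := ⟨PP.app v x.1.1 x.1.2 x.2.2.1, hc.trans (PP.conn_app v _ _ _)⟩
  onE y := ⟨PP.edge (PP.app v y.1.1.1 y.1.1.2 y.2.1.2.1) y.1.2 y.2.2.2,
    hc.trans (PP.conn_app v _ _ y.2.1.2.1)⟩
  hs y := rfl
  ht y := Subtype.ext (PP.vext (List.append_assoc _ _ _) (List.append_assoc _ _ _))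

theorem compMap_bijV {Q : BQuiv} {i : Q.V} (v₀ v : (PP Q i).V) (hc : Conn (PP Q i) v₀ v)
    (h : SpecialVertex Q i v) : Function.Bijective (compMap v₀ v hc).onV := by
  constructor
  · intro x y hxy
    apply PathQ.vext
    have : v.1.1.1.2 ++ x.1.2 = v.1.1.1.2 ++ y.1.2 :=
      congrArg (fun z : (Component (PP Q i) v₀).V => z.1.1.1.1.2) hxy
    exact List.append_cancel_left this
  · rintro ⟨w, hw⟩
    obtain ⟨r, hr, hwr⟩ := h.eq_app (hc.symm'.trans hw)
    exact ⟨⟨(w.1.1.1.1, r), hr.succ⟩, Subtype.ext hwr.symm⟩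

theorem PP.edge_eq {Q : BQuiv} {i : Q.V} (f : (PP Q i).E) (w : (PP Q i).V)
    (hw : (PP Q i).s f = w) : ∃ h, f = PP.edge w f.1.1.1.2 h := by
  subst hw
  refine ⟨f.1.1.2.2.2, ?_⟩
  have : f.1.1.1.2 = f.1.2.1.2 := f.2
  refine Subtype.ext (Prod.ext rfl (Subtype.ext (Prod.ext rfl this.symm)))

theorem compMap_bijE {Q : BQuiv} {i : Q.V} (v₀ v : (PP Q i).V) (hc : Conn (PP Q i) v₀ v)
    (h : SpecialVertex Q i v) : Function.Bijective (compMap v₀ v hc).onE := by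
  constructor
  · intro x y hxy
    have h1 : x.1.2 = y.1.2 :=
      congrArg (fun z : (Component (PP Q i) v₀).E => z.1.1.1.1.2) hxy
    have h2 := congrArg (Component (PP Q i) v₀).s hxy
    rw [(compMap v₀ v hc).hs, (compMap v₀ v hc).hs] at h2
    have h3 := congrArg Subtype.val ((compMap_bijV v₀ v hc h).1 h2)
    exact Subtype.ext (Prod.ext h3 h1)
  · rintro ⟨f, hf⟩
    obtain ⟨r, hr, hwr⟩ := h.eq_app (hc.symm'.trans hf)
    obtain ⟨h1, h2⟩ := PP.edge_eq f _ hwr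
    have h4 := (hr.snoc (e := f.1.1.1.2) h1).succ
    exact ⟨⟨((((PP Q i).s f).1.1.1.1, r), f.1.1.1.2), hr.succ, h4.2.2 _ (by simp), h1⟩,
      Subtype.ext h2.symm⟩

/-- Every connected component of `P_{Q,i} ×_Q P_{Q,i}` contains exactly
one vertex `(p, q)` with `p, q` either both trivial or with distinct last arrows; this
vertex is the unique source of its component, and the component is isomorphic over `Q` to
`P_{W,j}` where `j` is the common terminal vertex of `p` and `q` and `W` is the successor
closure of `j` in `Q`. -/
theorem component_pathQuiver_prod_self
    (Q : BQuiv) [Fintype Q.V] [Fintype Q.E] (hQ : Q.IsAcyclic) (i : Q.V) :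
    ∀ v₀ : (Fib (pathPi (fullSub Q) i) (pathPi (fullSub Q) i)).V,
      ∃ v : (Fib (pathPi (fullSub Q) i) (pathPi (fullSub Q) i)).V,
        (Conn (Fib (pathPi (fullSub Q) i) (pathPi (fullSub Q) i)) v₀ v ∧
          SpecialVertex Q i v) ∧
        (∀ v', Conn (Fib (pathPi (fullSub Q) i) (pathPi (fullSub Q) i)) v₀ v' →
          SpecialVertex Q i v' → v' = v) ∧
        (∀ e : (Fib (pathPi (fullSub Q) i) (pathPi (fullSub Q) i)).E,
          (Fib (pathPi (fullSub Q) i) (pathPi (fullSub Q) i)).t e ≠ v) ∧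
        (∀ v', Conn (Fib (pathPi (fullSub Q) i) (pathPi (fullSub Q) i)) v₀ v' →
          (∀ e : (Fib (pathPi (fullSub Q) i) (pathPi (fullSub Q) i)).E,
            (Fib (pathPi (fullSub Q) i) (pathPi (fullSub Q) i)).t e ≠ v') → v' = v) ∧
        Nonempty
          (OverIso
            (componentHom (fibHom (pathPi (fullSub Q) i) (pathPi (fullSub Q) i)) v₀)
            (pathPi (succClosure (fullSub Q) v.1.1.1.1) v.1.1.1.1)) := by
  intro v₀
  obtain ⟨v, hc, hs⟩ := SpecialVertex.exists_conn hQ _ v₀ rfl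
  refine ⟨v, ⟨hc, hs⟩, fun w hw hsw => hs.uniq (hc.symm'.trans hw) hsw, hs.source,
    fun w hw hsw => hs.uniq (hc.symm'.trans hw) (SpecialVertex.of_source hQ w hsw), ?_⟩
  exact OverIso.ofInv (compMap v₀ v hc) rfl (compMap_bijV v₀ v hc hs) (compMap_bijE v₀ v hc hs)
end
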